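/- Let ν ∈ ℂ with Re ν > −1 and let φ ∈ 𝒮⁺. Then for every x > 0 one has 𝓗_ν(ℬ_{2ν+1} φ)(x) = − x² 𝓗_ν(φ)(x), where ℬ_{2ν+1}φ(y) = φ''(y) + ((2ν+1)/y) φ'(y). -/

import Mathlib

open MeasureTheory Filter Set

noncomputable def besselJ (ν : ℂ) (z : ℝ) : ℂ :=
  ∑' k : ℕ, ((-1 : ℂ) ^ k / (Complex.Gamma (k + 1) * Complex.Gamma (ν + k + 1))) *
    ((z : ℂ) / 2) ^ (2 * (k : ℂ) + ν)

noncomputable def hankel (ν : ℂ) (φ : ℝ → ℂ) (x : ℝ) : ℂ :=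
  (x : ℂ) ^ (-ν) * ∫ y in Ioi (0:ℝ), φ y * besselJ ν (x * y) * (y : ℂ) ^ (ν + 1)

noncomputable def DIter : ℕ → (ℝ → ℂ) → (ℝ → ℂ)
  | 0, φ => φ
  | k + 1, φ => fun x => (1 / (x : ℂ)) * deriv (DIter k φ) x

def SPlus (φ : ℝ → ℂ) : Prop :=
  ContDiffOn ℝ (⊤ : ℕ∞) φ (Ioi 0) ∧
  ∀ m k : ℕ, ∃ C : ℝ, ∀ x > (0:ℝ), ‖(x : ℂ) ^ m * DIter k φ x‖ ≤ C

/-!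
Write `J_ν(t) = (t / 2) ^ ν j_ν(t)` with `j_ν` even and entire, so that the Hankel transform at `x`
is a constant multiple of `∫ y ^ (2 ν + 1) j_ν(x y) φ(y) dy`. Bessel's equation says
`ℬ_{2ν+1} j_ν = -j_ν`, so `y ↦ j_ν(x y)` has eigenvalue `-x ^ 2`. By Lagrange's identity
`ℬ_{2ν+1}` is symmetric for the weight `y ^ (2 ν + 1)` up to boundary terms, and these
vanish: at `0` since `Re ν > -1`, and at `∞` since `φ` decays rapidly while `j_ν` grows at most
polynomially. The growth bound is read off Bessel's equation too: the energy
`E = |j_ν| ^ 2 + |j_ν'| ^ 2` satisfies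
`E' = -2 Re (2 ν + 1) / t * |j_ν'| ^ 2 ≤ r E / t` for a suitable constant `r`.
-/

open scoped Topology

section BesselOperator

/-- The Bessel operator `ℬ_a φ = φ'' + (a / y) φ'` on the half-line. -/
noncomputable def besselOperator (a : ℂ) (φ : ℝ → ℂ) (y : ℝ) : ℂ :=
  deriv (deriv φ) y + (a / (y : ℂ)) * deriv φ y

lemma besselOperator_comp_mul_left (a : ℂ) (f : ℝ → ℂ) (x y : ℝ) :
    besselOperator a (fun t => f (x * t)) y = (x : ℂ) ^ 2 * besselOperator a f (x * y) := by
  have hderiv (g : ℝ → ℂ) (t : ℝ) : deriv (fun s => g (x * s)) t = x * deriv g (x * t) :=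
    deriv_comp_mul_left x g t
  have hderiv₂ : deriv (deriv fun t => f (x * t)) y = x * (x * deriv (deriv f) (x * y)) := by
    rw [funext (hderiv f), deriv_const_mul_field, hderiv]
  rw [besselOperator, besselOperator, hderiv₂, hderiv]
  rcases eq_or_ne x 0 with rfl | hx
  · simp
  · have hx' : (x : ℂ) ≠ 0 := by exact_mod_cast hx
    push_cast
    field_simp

/-- **Lagrange's identity**: with weight `y ^ a`, the Bessel operator is formally self-adjoint. -/
lemma hasDerivAt_cpow_mul_wronskian (a : ℂ) {φ ψ : ℝ → ℂ} {y : ℝ} (hy : 0 < y)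
    (hφ : DifferentiableAt ℝ φ y) (hφ' : DifferentiableAt ℝ (deriv φ) y)
    (hψ : DifferentiableAt ℝ ψ y) (hψ' : DifferentiableAt ℝ (deriv ψ) y) :
    HasDerivAt (fun t : ℝ => (t : ℂ) ^ a * (ψ t * deriv φ t - deriv ψ t * φ t))
      ((y : ℂ) ^ a * (ψ y * besselOperator a φ y - besselOperator a ψ y * φ y)) y := by
  have hy' : (y : ℂ) ≠ 0 := by exact_mod_cast hy.ne'
  have hpow : HasDerivAt (fun t : ℝ => (t : ℂ) ^ a) (a * (y : ℂ) ^ (a - 1)) y := by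
    simpa using ((hasDerivAt_id (y : ℂ)).cpow_const (c := a) (by simp [hy])).comp_ofReal
  refine (hpow.mul ((hψ.hasDerivAt.mul hφ'.hasDerivAt).sub
    (hψ'.hasDerivAt.mul hφ.hasDerivAt))).congr_deriv ?_
  simp only [Pi.sub_apply, Pi.mul_apply, besselOperator, Complex.cpow_sub _ _ hy',
    Complex.cpow_one]
  field_simp
  ring

lemma hasDerivAt_norm_sq_add_norm_deriv_sq {a : ℂ} {f : ℝ → ℂ} {t : ℝ}
    (hf : DifferentiableAt ℝ f t) (hf' : DifferentiableAt ℝ (deriv f) t)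
    (hode : besselOperator a f t = -f t) :
    HasDerivAt (fun s => ‖f s‖ ^ 2 + ‖deriv f s‖ ^ 2) (-2 * a.re / t * ‖deriv f t‖ ^ 2) t := by
  have hderiv₂ : deriv (deriv f) t = -f t - a / t * deriv f t := by
    rw [← hode, besselOperator, add_sub_cancel_right]
  refine (hf.hasDerivAt.norm_sq.add hf'.hasDerivAt.norm_sq).congr_deriv ?_
  have hinner : inner ℝ (deriv f t) (a / t * deriv f t) = a.re / t * ‖deriv f t‖ ^ 2 := by
    rw [Complex.inner, mul_assoc, Complex.mul_conj, Complex.normSq_eq_norm_sq,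
      Complex.re_mul_ofReal, Complex.div_ofReal_re]
  rw [hderiv₂, inner_sub_right, inner_neg_right, real_inner_comm, hinner]
  ring

variable {a : ℂ} {f : ℝ → ℂ} (hf : Differentiable ℝ f) (hf' : Differentiable ℝ (deriv f))
  (hode : ∀ t > (0 : ℝ), besselOperator a f t = -f t)

include hf hf' hode

lemma antitoneOn_rpow_neg_mul_norm_sq_add_norm_deriv_sq {r : ℝ} (hr : 0 ≤ r)
    (har : -2 * a.re ≤ r) :
    AntitoneOn (fun t : ℝ => t ^ (-r) * (‖f t‖ ^ 2 + ‖deriv f t‖ ^ 2)) (Ioi 0) := by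
  have hderiv (t : ℝ) (ht : 0 < t) :
      HasDerivAt (fun s : ℝ => s ^ (-r) * (‖f s‖ ^ 2 + ‖deriv f s‖ ^ 2))
        (-(t ^ (-r - 1) * (r * ‖f t‖ ^ 2 + (r + 2 * a.re) * ‖deriv f t‖ ^ 2))) t := by
    refine ((Real.hasDerivAt_rpow_const (Or.inl ht.ne')).mul
      (hasDerivAt_norm_sq_add_norm_deriv_sq (hf t) (hf' t) (hode t ht))).congr_deriv ?_
    rw [Real.rpow_sub_one ht.ne']
    field_simp
    ring
  refine antitoneOn_of_deriv_nonpos (convex_Ioi 0)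
    (fun t ht => (hderiv t ht).continuousAt.continuousWithinAt)
    (fun t ht => (hderiv t (interior_subset ht)).differentiableAt.differentiableWithinAt)
    fun t ht => ?_
  have ht' : 0 < t := interior_subset ht
  have har' : 0 ≤ r + 2 * a.re := by linarith
  rw [(hderiv t ht').deriv, neg_nonpos]
  positivity

lemma norm_le_sqrt_mul_pow_of_besselOperator_eq_neg {N : ℕ} (hN : -a.re ≤ N) {t : ℝ}
    (ht : 1 ≤ t) : ‖f t‖ ≤ √(‖f 1‖ ^ 2 + ‖deriv f 1‖ ^ 2) * t ^ N := by
  have ht0 : 0 < t := one_pos.trans_le ht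
  have hanti := antitoneOn_rpow_neg_mul_norm_sq_add_norm_deriv_sq hf hf' hode
    (r := (2 * N : ℕ)) (by positivity) (by push_cast; linarith)
    (mem_Ioi.2 one_pos) (mem_Ioi.2 ht0) ht
  simp only [Real.one_rpow, one_mul, Real.rpow_neg ht0.le, Real.rpow_natCast] at hanti
  rw [inv_mul_le_iff₀ (by positivity)] at hanti
  refine le_of_sq_le_sq ?_ (by positivity)
  calc ‖f t‖ ^ 2 ≤ ‖f t‖ ^ 2 + ‖deriv f t‖ ^ 2 := le_add_of_nonneg_right (by positivity)
    _ ≤ t ^ (2 * N) * (‖f 1‖ ^ 2 + ‖deriv f 1‖ ^ 2) := hanti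
    _ = (√(‖f 1‖ ^ 2 + ‖deriv f 1‖ ^ 2) * t ^ N) ^ 2 := by
      rw [mul_pow, Real.sq_sqrt (by positivity)]
      ring

lemma exists_norm_le_pow_of_besselOperator_eq_neg :
    ∃ (K : ℝ) (N : ℕ), ∀ t ≥ (0 : ℝ), ‖f t‖ ≤ K * (1 + t) ^ N := by
  obtain ⟨A, hA⟩ := (isCompact_Icc (a := (0 : ℝ)) (b := 1)).exists_bound_of_continuousOn
    hf.continuous.continuousOn
  obtain ⟨N, hN⟩ := exists_nat_ge (-a.re)
  have hA0 : 0 ≤ A := (norm_nonneg _).trans (hA 0 (by simp))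
  set B := √(‖f 1‖ ^ 2 + ‖deriv f 1‖ ^ 2)
  have hB0 : 0 ≤ B := Real.sqrt_nonneg _
  refine ⟨A + B, N, fun t ht => ?_⟩
  rcases le_total t 1 with ht1 | ht1
  · calc ‖f t‖ ≤ A := hA t ⟨ht, ht1⟩
      _ ≤ A + B := le_add_of_nonneg_right hB0
      _ ≤ (A + B) * (1 + t) ^ N :=
        le_mul_of_one_le_right (by positivity) (one_le_pow₀ (by linarith))
  · calc ‖f t‖ ≤ B * t ^ N := norm_le_sqrt_mul_pow_of_besselOperator_eq_neg hf hf' hode hN ht1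
      _ ≤ (A + B) * (1 + t) ^ N := by gcongr <;> linarith

end BesselOperator

section BesselFunction

/-- The Bessel–Clifford function `∑ k, z ^ k / (k! Γ(ν + k + 1))`, the entire function of `z`
underlying the Bessel function `J_ν`. -/
noncomputable def besselClifford (ν z : ℂ) : ℂ :=
  Complex.regularizedHGFun 0 {ν + 1} z

lemma hasFPowerSeriesOnBall_besselClifford (ν : ℂ) :
    HasFPowerSeriesOnBall (besselClifford ν) (Complex.regularizedHGFunSeries 0 {ν + 1}) 0 ⊤ := by
  have hradius := Complex.radius_regularizedHGFunSeries_eq_top (a := 0) (b := {ν + 1}) (by simp)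
  have h := (Complex.regularizedHGFunSeries 0 {ν + 1}).hasFPowerSeriesOnBall (by simp [hradius])
  rwa [hradius] at h

lemma hasSum_besselClifford (ν z : ℂ) :
    HasSum (fun k : ℕ => z ^ k / (k.factorial * Complex.Gamma (ν + k + 1)))
      (besselClifford ν z) := by
  have h := (hasFPowerSeriesOnBall_besselClifford ν).hasSum (y := z) (by simp)
  rw [zero_add] at h
  refine h.congr_fun fun k => ?_
  rw [Complex.regularizedHGFunSeries, FormalMultilinearSeries.ofScalars_apply_eq,
    Complex.regularizedHGFunCoeff]
  simp [add_right_comm, div_eq_inv_mul]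

lemma hasDerivAt_besselClifford (ν z : ℂ) :
    HasDerivAt (besselClifford ν) (besselClifford (ν + 1) z) z := by
  have hanalytic := hasFPowerSeriesOnBall_besselClifford ν
  have hdiff : DifferentiableAt ℂ (besselClifford ν) z :=
    (hanalytic.analyticAt_of_mem (by simp)).differentiableAt
  have hsum := (hanalytic.fderiv.hasSum (y := z) (by simp)).mapL
    (ContinuousLinearMap.apply ℂ ℂ (1 : ℂ))
  refine hdiff.hasDerivAt.congr_deriv (HasSum.unique ?_ (hasSum_besselClifford (ν + 1) z))
  rw [zero_add] at hsum
  refine hsum.congr_fun fun k => ?_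
  rw [FormalMultilinearSeries.apply_eq_pow_smul_coeff, ContinuousLinearMap.apply_apply,
    smul_apply, FormalMultilinearSeries.derivSeries_coeff_one,
    Complex.regularizedHGFunSeries_coeff, Complex.regularizedHGFunCoeff]
  have hk : (k + 1 : ℂ) ≠ 0 := by exact_mod_cast k.succ_ne_zero
  simp only [Multiset.map_zero, Multiset.prod_zero, Nat.factorial_succ, Nat.cast_mul, Nat.cast_add,
    Nat.cast_one, Multiset.map_singleton, Multiset.prod_singleton, nsmul_eq_mul, smul_eq_mul]
  field_simp
  rw [add_assoc (ν + 1)]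

lemma besselClifford_eq_add (ν z : ℂ) :
    besselClifford ν z =
      (ν + 1) * besselClifford (ν + 1) z + z * besselClifford (ν + 2) z := by
  have hshift : HasSum (fun k : ℕ => k * (z ^ k / (k.factorial * Complex.Gamma (ν + 1 + k + 1))))
      (z * besselClifford (ν + 2) z) := by
    rw [← hasSum_nat_add_iff' 1, Finset.sum_range_one, Nat.cast_zero, zero_mul, sub_zero]
    refine ((hasSum_besselClifford (ν + 2) z).mul_left z).congr_fun fun k => ?_
    have hk : (k + 1 : ℂ) ≠ 0 := by exact_mod_cast k.succ_ne_zero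
    rw [show ν + 1 + (k + 1 : ℕ) + 1 = ν + 2 + k + 1 by push_cast; ring, Nat.factorial_succ]
    push_cast
    rw [pow_succ']
    field_simp
  refine (hasSum_besselClifford ν z).unique
    ((((hasSum_besselClifford (ν + 1) z).mul_left (ν + 1)).add hshift).congr_fun fun k => ?_)
  have hGamma := Complex.one_div_Gamma_eq_self_mul_one_div_Gamma_add_one (ν + k + 1)
  rw [add_right_comm ν 1, div_mul_eq_div_div_swap, div_mul_eq_div_div_swap]
  linear_combination (z ^ k / k.factorial) * hGamma

/-- The normalized Bessel function `(t / 2) ^ (-ν) * J_ν(t)`, a smooth even function on `ℝ`. -/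
noncomputable def normalizedBesselJ (ν : ℂ) (t : ℝ) : ℂ :=
  besselClifford ν (-(t / 2 : ℂ) ^ 2)

lemma besselJ_eq_cpow_mul_normalizedBesselJ (ν : ℂ) {z : ℝ} (hz : 0 < z) :
    besselJ ν z = (z / 2 : ℂ) ^ ν * normalizedBesselJ ν z := by
  have hz' : (z / 2 : ℂ) ≠ 0 := by simp [hz.ne']
  refine (((hasSum_besselClifford ν _).mul_left _).congr_fun fun k => ?_).tsum_eq
  rw [Complex.Gamma_nat_eq_factorial, Complex.cpow_add _ _ hz', ← Nat.cast_ofNat,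
    ← Nat.cast_mul, Complex.cpow_natCast, pow_mul, neg_pow (_ ^ 2)]
  ring

lemma hasDerivAt_normalizedBesselJ (ν : ℂ) (t : ℝ) :
    HasDerivAt (normalizedBesselJ ν) (-(t / 2 : ℂ) * normalizedBesselJ (ν + 1) t) t := by
  have hinner : HasDerivAt (fun s : ℂ => -(s / 2) ^ 2) (-(t / 2 : ℂ)) t :=
    (((hasDerivAt_id (t : ℂ)).div_const 2).pow 2).neg.congr_deriv (by
      rw [id_eq, pow_one, Nat.cast_ofNat]; ring)
  refine ((hasDerivAt_besselClifford ν _).comp (t : ℂ) hinner).comp_ofReal.congr_deriv ?_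
  rw [normalizedBesselJ, mul_comm]

lemma deriv_normalizedBesselJ (ν : ℂ) :
    deriv (normalizedBesselJ ν) = fun t : ℝ => -(t / 2 : ℂ) * normalizedBesselJ (ν + 1) t :=
  funext fun t => (hasDerivAt_normalizedBesselJ ν t).deriv

lemma differentiable_normalizedBesselJ (ν : ℂ) : Differentiable ℝ (normalizedBesselJ ν) :=
  fun t => (hasDerivAt_normalizedBesselJ ν t).differentiableAt

lemma hasDerivAt_deriv_normalizedBesselJ (ν : ℂ) (t : ℝ) :
    HasDerivAt (deriv (normalizedBesselJ ν))
      (-(1 / 2) * normalizedBesselJ (ν + 1) t + (t / 2 : ℂ) ^ 2 * normalizedBesselJ (ν + 2) t)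
      t := by
  have hlin : HasDerivAt (fun s : ℝ => -(s / 2 : ℂ)) (-(1 / 2)) t :=
    ((hasDerivAt_id (t : ℂ)).comp_ofReal.div_const 2).neg
  rw [deriv_normalizedBesselJ]
  refine (hlin.mul (hasDerivAt_normalizedBesselJ (ν + 1) t)).congr_deriv ?_
  rw [show ν + 1 + 1 = ν + 2 by ring]
  ring

lemma differentiable_deriv_normalizedBesselJ (ν : ℂ) :
    Differentiable ℝ (deriv (normalizedBesselJ ν)) :=
  fun t => (hasDerivAt_deriv_normalizedBesselJ ν t).differentiableAt

lemma besselOperator_normalizedBesselJ (ν : ℂ) {t : ℝ} (ht : t ≠ 0) :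
    besselOperator (2 * ν + 1) (normalizedBesselJ ν) t = -normalizedBesselJ ν t := by
  have ht' : (t : ℂ) ≠ 0 := by exact_mod_cast ht
  have hrec : normalizedBesselJ ν t = (ν + 1) * normalizedBesselJ (ν + 1) t +
    -(t / 2 : ℂ) ^ 2 * normalizedBesselJ (ν + 2) t := besselClifford_eq_add ν _
  rw [besselOperator, (hasDerivAt_deriv_normalizedBesselJ ν t).deriv,
    (hasDerivAt_normalizedBesselJ ν t).deriv, hrec]
  field_simp
  ring

lemma exists_norm_normalizedBesselJ_le (ν : ℂ) :
    ∃ (K : ℝ) (N : ℕ), ∀ t ≥ (0 : ℝ), ‖normalizedBesselJ ν t‖ ≤ K * (1 + t) ^ N :=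
  exists_norm_le_pow_of_besselOperator_eq_neg (differentiable_normalizedBesselJ ν)
    (differentiable_deriv_normalizedBesselJ ν)
    fun _ ht => besselOperator_normalizedBesselJ ν ht.ne'

end BesselFunction

section RapidDecay

variable {E : Type*} [NormedAddCommGroup E] [NormedSpace ℂ E] {f g : ℝ → E}

/-- Rapid decrease on the half-line: `f` is continuous on `(0, ∞)` and bounded there, together with
all its products with powers. Nothing is required of `f` on `(-∞, 0]`. -/
structure IsRapidlyDecreasing (f : ℝ → E) : Prop where
  continuousOn : ContinuousOn f (Ioi 0)
  exists_norm_le : ∀ m : ℕ, ∃ C : ℝ, ∀ y > (0 : ℝ), ‖(y : ℂ) ^ m • f y‖ ≤ C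

namespace IsRapidlyDecreasing

lemma congr (hf : IsRapidlyDecreasing f) (hgf : EqOn g f (Ioi 0)) : IsRapidlyDecreasing g where
  continuousOn := hf.continuousOn.congr hgf
  exists_norm_le m :=
    (hf.exists_norm_le m).imp fun _ hC y hy => by simpa only [hgf hy] using hC y hy

lemma add (hf : IsRapidlyDecreasing f) (hg : IsRapidlyDecreasing g) :
    IsRapidlyDecreasing fun y => f y + g y where
  continuousOn := hf.continuousOn.add hg.continuousOn
  exists_norm_le m := by
    obtain ⟨A, hA⟩ := hf.exists_norm_le m
    obtain ⟨B, hB⟩ := hg.exists_norm_le m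
    exact ⟨A + B, fun y hy => smul_add ((y : ℂ) ^ m) (f y) (g y) ▸
      norm_add_le_of_le (hA y hy) (hB y hy)⟩

lemma exists_norm_one_add_pow_smul_le (hf : IsRapidlyDecreasing f) (m N : ℕ) :
    ∃ C : ℝ, ∀ y > (0 : ℝ), (1 + y) ^ N * ‖(y : ℂ) ^ m • f y‖ ≤ C := by
  induction N generalizing m with
  | zero => simpa using hf.exists_norm_le m
  | succ N ih =>
    obtain ⟨A, hA⟩ := ih m
    obtain ⟨B, hB⟩ := ih (m + 1)
    refine ⟨A + B, fun y hy => ?_⟩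
    calc (1 + y) ^ (N + 1) * ‖(y : ℂ) ^ m • f y‖
        = (1 + y) ^ N * ‖(y : ℂ) ^ m • f y‖ + (1 + y) ^ N * ‖(y : ℂ) ^ (m + 1) • f y‖ := by
          simp only [norm_smul, norm_pow, Complex.norm_real, Real.norm_of_nonneg hy.le]
          ring
      _ ≤ A + B := add_le_add (hA y hy) (hB y hy)

lemma smul_of_norm_le (hf : IsRapidlyDecreasing f) {u : ℝ → ℂ} (hu : ContinuousOn u (Ioi 0))
    {K : ℝ} {N : ℕ} (huK : ∀ y > (0 : ℝ), ‖u y‖ ≤ K * (1 + y) ^ N) :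
    IsRapidlyDecreasing fun y => u y • f y where
  continuousOn := hu.smul hf.continuousOn
  exists_norm_le m := by
    obtain ⟨C, hC⟩ := hf.exists_norm_one_add_pow_smul_le m N
    have hK : 0 ≤ K := nonneg_of_mul_nonneg_left ((norm_nonneg _).trans (huK 1 one_pos))
      (by positivity)
    refine ⟨K * C, fun y hy => ?_⟩
    calc ‖(y : ℂ) ^ m • u y • f y‖ = ‖u y‖ * ‖(y : ℂ) ^ m • f y‖ := by
          rw [smul_comm, norm_smul]
      _ ≤ K * (1 + y) ^ N * ‖(y : ℂ) ^ m • f y‖ := by gcongr; exact huK y hy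
      _ ≤ K * C := by rw [mul_assoc]; gcongr; exact hC y hy

lemma const_smul (hf : IsRapidlyDecreasing f) (c : ℂ) : IsRapidlyDecreasing fun y => c • f y :=
  hf.smul_of_norm_le continuousOn_const (K := ‖c‖) (N := 0) (by simp)

lemma ofReal_smul (hf : IsRapidlyDecreasing f) : IsRapidlyDecreasing fun y => (y : ℂ) • f y :=
  hf.smul_of_norm_le Complex.continuous_ofReal.continuousOn (K := 1) (N := 1) fun y hy => by
    simp [abs_of_pos hy]

lemma normalizedBesselJ_smul (hf : IsRapidlyDecreasing f) (ν : ℂ) {x : ℝ} (hx : 0 ≤ x) :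
    IsRapidlyDecreasing fun y => normalizedBesselJ ν (x * y) • f y := by
  obtain ⟨K, N, hK⟩ := exists_norm_normalizedBesselJ_le ν
  have hK0 : 0 ≤ K := by simpa using (norm_nonneg _).trans (hK 0 le_rfl)
  refine hf.smul_of_norm_le (K := K * (1 + x) ^ N) (N := N)
    ((differentiable_normalizedBesselJ ν).continuous.comp (by fun_prop)).continuousOn
    fun y hy => ?_
  calc ‖normalizedBesselJ ν (x * y)‖ ≤ K * (1 + x * y) ^ N := hK _ (by positivity)
    _ ≤ K * ((1 + x) * (1 + y)) ^ N := by gcongr; nlinarith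
    _ = K * (1 + x) ^ N * (1 + y) ^ N := by rw [mul_pow, mul_assoc]

lemma norm_le_rpow (hf : IsRapidlyDecreasing f) (m : ℕ) :
    ∃ C : ℝ, ∀ y > (0 : ℝ), ‖f y‖ ≤ C * ‖y ^ (-m : ℝ)‖ := by
  obtain ⟨C, hC⟩ := hf.exists_norm_le m
  refine ⟨C, fun y hy => ?_⟩
  have h := hC y hy
  rw [norm_smul, norm_pow, Complex.norm_real, Real.norm_of_nonneg hy.le] at h
  rwa [Real.rpow_neg hy.le, Real.rpow_natCast, norm_inv, norm_pow, Real.norm_of_nonneg hy.le,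
    ← div_eq_mul_inv, le_div_iff₀' (by positivity)]

lemma isBigO_atTop (hf : IsRapidlyDecreasing f) (m : ℕ) :
    f =O[atTop] fun y : ℝ => y ^ (-m : ℝ) := by
  obtain ⟨C, hC⟩ := hf.norm_le_rpow m
  exact .of_bound C ((eventually_gt_atTop 0).mono hC)

lemma isBigO_nhdsGT_zero (hf : IsRapidlyDecreasing f) :
    f =O[𝓝[>] 0] fun y : ℝ => y ^ (-0 : ℝ) := by
  obtain ⟨C, hC⟩ := hf.norm_le_rpow 0
  exact .of_bound C (eventually_nhdsWithin_of_forall (by simpa using hC))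

lemma mellinConvergent (hf : IsRapidlyDecreasing f) {s : ℂ} (hs : 0 < s.re) :
    MellinConvergent f s := by
  obtain ⟨m, hm⟩ := exists_nat_gt s.re
  exact mellinConvergent_of_isBigO_rpow (hf.continuousOn.locallyIntegrableOn measurableSet_Ioi)
    (hf.isBigO_atTop m) hm hf.isBigO_nhdsGT_zero hs

lemma exists_norm_cpow_smul_le_rpow (hf : IsRapidlyDecreasing f) (s : ℂ) (m : ℕ) :
    ∃ C : ℝ, ∀ y > (0 : ℝ), ‖(y : ℂ) ^ s • f y‖ ≤ C * y ^ (s.re - m) := by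
  obtain ⟨C, hC⟩ := hf.exists_norm_le m
  refine ⟨C, fun y hy => ?_⟩
  calc ‖(y : ℂ) ^ s • f y‖ = ‖(y : ℂ) ^ m • f y‖ * y ^ (s.re - m) := by
        rw [norm_smul, norm_smul, Complex.norm_cpow_eq_rpow_re_of_pos hy, norm_pow,
          Complex.norm_of_nonneg hy.le, mul_right_comm, ← Real.rpow_natCast, ← Real.rpow_add hy,
          add_sub_cancel]
    _ ≤ C * y ^ (s.re - m) := by gcongr; exact hC y hy

lemma tendsto_cpow_smul_atTop (hf : IsRapidlyDecreasing f) (s : ℂ) :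
    Tendsto (fun y : ℝ => (y : ℂ) ^ s • f y) atTop (𝓝 0) := by
  obtain ⟨m, hm⟩ := exists_nat_gt s.re
  obtain ⟨C, hC⟩ := hf.exists_norm_cpow_smul_le_rpow s m
  have hlim : Tendsto (fun y : ℝ => C * y ^ (s.re - m)) atTop (𝓝 0) := by
    simpa using (tendsto_rpow_neg_atTop (sub_pos.2 hm)).const_mul C
  exact squeeze_zero_norm' ((eventually_gt_atTop 0).mono hC) hlim

lemma tendsto_cpow_smul_nhdsGT_zero (hf : IsRapidlyDecreasing f) {s : ℂ} (hs : 0 < s.re) :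
    Tendsto (fun y : ℝ => (y : ℂ) ^ s • f y) (𝓝[>] 0) (𝓝 0) := by
  obtain ⟨C, hC⟩ := hf.exists_norm_cpow_smul_le_rpow s 0
  have hlim : Tendsto (fun y : ℝ => C * y ^ (s.re - (0 : ℕ))) (𝓝[>] 0) (𝓝 0) := by
    have := ((Real.continuousAt_rpow_const 0 s.re (.inr hs.le)).tendsto.const_mul C)
    simpa [Real.zero_rpow hs.ne'] using this.mono_left nhdsWithin_le_nhds
  exact squeeze_zero_norm' (eventually_nhdsWithin_of_forall hC) hlim

lemma mellin_eq_zero_of_hasDerivAt [CompleteSpace E] (hf : IsRapidlyDecreasing f) {s : ℂ}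
    (hs : 0 < s.re) (hg : MellinConvergent g s)
    (hderiv : ∀ y > (0 : ℝ),
      HasDerivAt (fun t : ℝ => (t : ℂ) ^ s • f t) ((y : ℂ) ^ (s - 1) • g y) y) :
    mellin g s = 0 := by
  have hs0 : s ≠ 0 := by rintro rfl; simp at hs
  have hcont : ContinuousWithinAt (fun t : ℝ => (t : ℂ) ^ s • f t) (Ici 0) 0 := by
    rw [← continuousWithinAt_Ioi_iff_Ici]
    simpa [ContinuousWithinAt, Complex.zero_cpow hs0] using hf.tendsto_cpow_smul_nhdsGT_zero hs
  simpa [mellin, Complex.zero_cpow hs0] using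
    integral_Ioi_of_hasDerivAt_of_tendsto hcont hderiv hg (hf.tendsto_cpow_smul_atTop s)

end IsRapidlyDecreasing

end RapidDecay

section SPlus

variable {φ : ℝ → ℂ}

/-- The `C^n` counterpart of `𝒮⁺`, in which only `((1/x) d/dx)^k φ` with `k ≤ n` is controlled. -/
def SPlusOfOrder (n : ℕ) (φ : ℝ → ℂ) : Prop :=
  ContDiffOn ℝ n φ (Ioi 0) ∧
  ∀ k ≤ n, ∀ m : ℕ, ∃ C : ℝ, ∀ x > (0 : ℝ), ‖(x : ℂ) ^ m * DIter k φ x‖ ≤ C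

lemma SPlus.sPlusOfOrder (hφ : SPlus φ) (n : ℕ) : SPlusOfOrder n φ :=
  ⟨hφ.1.of_le (by exact_mod_cast le_top), fun k _ m => hφ.2 m k⟩

lemma deriv_DIter (k : ℕ) (φ : ℝ → ℂ) {y : ℝ} (hy : y ≠ 0) :
    deriv (DIter k φ) y = y * DIter (k + 1) φ y := by
  have hy' : (y : ℂ) ≠ 0 := by exact_mod_cast hy
  simp only [DIter]
  field_simp

lemma contDiffOn_DIter {n k : ℕ} (hφ : ContDiffOn ℝ (n + k : ℕ) φ (Ioi 0)) :
    ContDiffOn ℝ n (DIter k φ) (Ioi 0) := by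
  induction k generalizing n with
  | zero => exact hφ
  | succ k ih =>
    have hinv : ContDiffOn ℝ n (fun x : ℝ => 1 / (x : ℂ)) (Ioi 0) :=
      contDiffOn_const.mul (Complex.ofRealCLM.contDiff.contDiffOn.inv fun x hx => by
        simpa using (mem_Ioi.1 hx).ne')
    have hDIter : ContDiffOn ℝ (n + 1 : ℕ) (DIter k φ) (Ioi 0) := ih (by convert hφ using 2; ring)
    exact hinv.mul (hDIter.deriv_of_isOpen isOpen_Ioi (by norm_cast))

lemma besselOperator_eq_DIter (a : ℂ) {y : ℝ} (hy : 0 < y)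
    (hφ : DifferentiableAt ℝ (DIter 1 φ) y) :
    besselOperator a φ y = (a + 1) * DIter 1 φ y + y * (y * DIter 2 φ y) := by
  have hderiv {t : ℝ} (ht : 0 < t) : deriv φ t = t * DIter 1 φ t := deriv_DIter 0 φ ht.ne'
  have hderiv₂ : deriv (deriv φ) y = DIter 1 φ y + y * (y * DIter 2 φ y) := by
    have hmul := ((hasDerivAt_id (y : ℂ)).comp_ofReal.mul hφ.hasDerivAt).deriv
    have heq : deriv φ =ᶠ[𝓝 y] fun t => t * DIter 1 φ t :=
      (eventually_gt_nhds hy).mono fun _ => hderiv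
    rw [heq.deriv_eq, ← deriv_DIter 1 φ hy.ne']
    exact hmul.trans (by simp)
  have hy' : (y : ℂ) ≠ 0 := by exact_mod_cast hy.ne'
  rw [besselOperator, hderiv₂, hderiv hy]
  field_simp
  ring

namespace SPlusOfOrder

lemma isRapidlyDecreasing_DIter {n k : ℕ} (hφ : SPlusOfOrder n φ) (hk : k ≤ n) :
    IsRapidlyDecreasing (DIter k φ) where
  continuousOn := (contDiffOn_DIter (n := 0) (hφ.1.of_le (by simpa using hk))).continuousOn
  exists_norm_le := hφ.2 k hk

lemma differentiableAt_deriv (hφ : SPlusOfOrder 2 φ) {y : ℝ} (hy : 0 < y) :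
    DifferentiableAt ℝ (deriv φ) y :=
  ((hφ.1.deriv_of_isOpen (m := 1) isOpen_Ioi (by norm_num)).contDiffAt
    (Ioi_mem_nhds hy)).differentiableAt one_ne_zero

lemma differentiableAt_DIter {n k : ℕ} (hφ : SPlusOfOrder n φ) (hk : k < n) {y : ℝ} (hy : 0 < y) :
    DifferentiableAt ℝ (DIter k φ) y :=
  ((contDiffOn_DIter (n := 1) (hφ.1.of_le (by norm_cast; lia))).contDiffAt
    (Ioi_mem_nhds hy)).differentiableAt (by simp)

lemma isRapidlyDecreasing_besselOperator (hφ : SPlusOfOrder 2 φ) (a : ℂ) :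
    IsRapidlyDecreasing (besselOperator a φ) :=
  (((hφ.isRapidlyDecreasing_DIter one_le_two).const_smul (a + 1)).add
    (hφ.isRapidlyDecreasing_DIter le_rfl).ofReal_smul.ofReal_smul).congr fun _ hy =>
      besselOperator_eq_DIter a hy (hφ.differentiableAt_DIter one_lt_two hy)

end SPlusOfOrder

end SPlus

lemma hankel_eq_mellin (ν : ℂ) (ψ : ℝ → ℂ) {x : ℝ} (hx : 0 < x) :
    hankel ν ψ x =
      2 ^ (-ν) * mellin (fun y => normalizedBesselJ ν (x * y) * ψ y) (2 * ν + 2) := by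
  have hx' : (x : ℂ) ≠ 0 := by exact_mod_cast hx.ne'
  rw [hankel, mellin, ← integral_const_mul, ← integral_const_mul]
  refine setIntegral_congr_fun measurableSet_Ioi fun y (hy : 0 < y) => ?_
  have hy' : (y : ℂ) ≠ 0 := by exact_mod_cast hy.ne'
  have hpow : ((x * y : ℝ) / 2 : ℂ) ^ ν = x ^ ν * y ^ ν * 2 ^ (-ν) := by
    rw [← Complex.ofReal_ofNat, Complex.div_cpow_ofReal_nonneg (by positivity) zero_le_two,
      Complex.ofReal_mul, Complex.mul_cpow_ofReal_nonneg hx.le hy.le, Complex.cpow_neg,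
      div_eq_mul_inv]
  have hpow' : (y : ℂ) ^ (2 * ν + 2 - 1) = y ^ ν * y ^ (ν + 1) := by
    rw [← Complex.cpow_add _ _ hy']
    ring_nf
  have hcancel : (x : ℂ) ^ (-ν) * x ^ ν = 1 := by
    rw [← Complex.cpow_add _ _ hx', neg_add_cancel, Complex.cpow_zero]
  simp only [smul_eq_mul]
  rw [besselJ_eq_cpow_mul_normalizedBesselJ ν (mul_pos hx hy), hpow, hpow']
  linear_combination
    (ψ y * y ^ ν * 2 ^ (-ν) * normalizedBesselJ ν (x * y) * y ^ (ν + 1)) * hcancel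

/-- The extra factor `y` gained here makes the boundary term at `0` vanish even for
`Re ν ≤ -1 / 2`. -/
lemma cpow_mul_wronskian_normalizedBesselJ (ν : ℂ) (φ : ℝ → ℂ) (x : ℝ) {y : ℝ} (hy : 0 < y) :
    (y : ℂ) ^ (2 * ν + 1) * (normalizedBesselJ ν (x * y) * deriv φ y -
        deriv (fun t => normalizedBesselJ ν (x * t)) y * φ y) =
      (y : ℂ) ^ (2 * ν + 2) * (normalizedBesselJ ν (x * y) * DIter 1 φ y +
        (x : ℂ) ^ 2 / 2 * (normalizedBesselJ (ν + 1) (x * y) * φ y)) := by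
  have hy' : (y : ℂ) ≠ 0 := by exact_mod_cast hy.ne'
  have hpow : (y : ℂ) ^ (2 * ν + 2) = y ^ (2 * ν + 1) * y := by
    rw [show 2 * ν + 2 = 2 * ν + 1 + 1 by ring, Complex.cpow_add _ _ hy', Complex.cpow_one]
  have hφ : deriv φ y = y * DIter 1 φ y := deriv_DIter 0 φ hy.ne'
  have hderiv := deriv_comp_mul_left x (normalizedBesselJ ν) y
  rw [deriv_normalizedBesselJ, Complex.real_smul] at hderiv
  rw [hpow, hφ, hderiv]
  push_cast
  ring

lemma hasDerivAt_cpow_mul_wronskian_normalizedBesselJ (ν : ℂ) {φ : ℝ → ℂ} {x y : ℝ}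
    (hx : 0 < x) (hy : 0 < y) (hφ : DifferentiableAt ℝ φ y)
    (hφ' : DifferentiableAt ℝ (deriv φ) y) :
    HasDerivAt (fun t : ℝ => (t : ℂ) ^ (2 * ν + 1) * (normalizedBesselJ ν (x * t) * deriv φ t -
        deriv (fun s => normalizedBesselJ ν (x * s)) t * φ t))
      ((y : ℂ) ^ (2 * ν + 1) * (normalizedBesselJ ν (x * y) * besselOperator (2 * ν + 1) φ y +
        (x : ℂ) ^ 2 * (normalizedBesselJ ν (x * y) * φ y))) y := by
  have hderiv : deriv (fun t => normalizedBesselJ ν (x * t)) =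
      fun t => (x : ℂ) * deriv (normalizedBesselJ ν) (x * t) :=
    funext fun t => deriv_comp_mul_left x (normalizedBesselJ ν) t
  have hψ : Differentiable ℝ fun t => normalizedBesselJ ν (x * t) :=
    (differentiable_normalizedBesselJ ν).comp (differentiable_id.const_mul x)
  have hψ' : Differentiable ℝ (deriv fun t => normalizedBesselJ ν (x * t)) := by
    rw [hderiv]
    exact ((differentiable_deriv_normalizedBesselJ ν).comp
      (differentiable_id.const_mul x)).const_mul _
  refine (hasDerivAt_cpow_mul_wronskian (2 * ν + 1) hy hφ hφ' (hψ y) (hψ' y)).congr_deriv ?_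
  rw [besselOperator_comp_mul_left, besselOperator_normalizedBesselJ ν (mul_pos hx hy).ne']
  ring

theorem mellin_normalizedBesselJ_mul_besselOperator {ν : ℂ} (hν : -1 < ν.re) {φ : ℝ → ℂ}
    (hφ : SPlusOfOrder 2 φ) {x : ℝ} (hx : 0 < x) :
    mellin (fun y => normalizedBesselJ ν (x * y) * besselOperator (2 * ν + 1) φ y) (2 * ν + 2) =
      -(x : ℂ) ^ 2 * mellin (fun y => normalizedBesselJ ν (x * y) * φ y) (2 * ν + 2) := by
  have hs : 0 < (2 * ν + 2).re := by
    simpa using (show 0 < 2 * ν.re + 2 by linarith)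
  have hφ₀ : IsRapidlyDecreasing φ := hφ.isRapidlyDecreasing_DIter zero_le_two
  have hφ₁ : IsRapidlyDecreasing (DIter 1 φ) := hφ.isRapidlyDecreasing_DIter one_le_two
  have hℬφ := hφ.isRapidlyDecreasing_besselOperator (2 * ν + 1)
  have hconv := (hφ₀.normalizedBesselJ_smul ν hx.le).mellinConvergent hs
  have hconvℬ := (hℬφ.normalizedBesselJ_smul ν hx.le).mellinConvergent hs
  have hsum := hasMellin_add hconvℬ (hconv.const_smul ((x : ℂ) ^ 2))
  have hboundary := (hφ₁.normalizedBesselJ_smul ν hx.le).add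
    ((hφ₀.normalizedBesselJ_smul (ν + 1) hx.le).const_smul ((x : ℂ) ^ 2 / 2))
  have hzero := hboundary.mellin_eq_zero_of_hasDerivAt hs hsum.1 fun y hy => by
    have hexp : 2 * ν + 2 - 1 = 2 * ν + 1 := by ring
    rw [hexp]
    have hderiv := hasDerivAt_cpow_mul_wronskian_normalizedBesselJ ν hx hy
      (hφ.differentiableAt_DIter two_pos hy) (hφ.differentiableAt_deriv hy)
    exact hderiv.congr_of_eventuallyEq <|
      (eventually_gt_nhds hy).mono fun t ht => (cpow_mul_wronskian_normalizedBesselJ ν φ x ht).symm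
  rw [hsum.2, mellin_const_smul] at hzero
  simp only [smul_eq_mul] at hzero
  linear_combination hzero

theorem hankel_bessel_operator_general {ν : ℂ} (hν : -1 < ν.re) {φ : ℝ → ℂ}
    (hφ : SPlusOfOrder 2 φ) {x : ℝ} (hx : 0 < x) :
    hankel ν (besselOperator (2 * ν + 1) φ) x = -(x : ℂ) ^ 2 * hankel ν φ x := by
  rw [hankel_eq_mellin ν _ hx, hankel_eq_mellin ν φ hx,
    mellin_normalizedBesselJ_mul_besselOperator hν hφ hx]
  ring

/-- The modified Hankel transform diagonalizes the Bessel operator: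
`𝓗_ν(ℬ_{2ν+1} φ)(x) = -x² 𝓗_ν(φ)(x)` for `Re ν > -1`, `φ ∈ 𝒮⁺`, `x > 0`. -/
theorem hankel_bessel_operator (ν : ℂ) (hν : -1 < ν.re) (φ : ℝ → ℂ) (hφ : SPlus φ) :
    ∀ x > (0:ℝ),
      hankel ν (fun y => deriv (deriv φ) y + ((2 * ν + 1) / (y : ℂ)) * deriv φ y) x =
        -(x : ℂ) ^ 2 * hankel ν φ x :=
  fun _ hx => hankel_bessel_operator_general hν (hφ.sPlusOfOrder 2) hx
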